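/- arXiv:2508.16986 — 7 statements merged into one kernel-verified Lean document; each statement's English description precedes it below -/
import Mathlib

section
/- Let F = (A, R) be a finitary argumentation framework, and fix subsets D ⊆ A and E ⊆ A. Let Y be the set of arguments b ∈ A such that there exists an admissible extension X with D ∪ {b} ⊆ X and E ∩ X = ∅. Then there exists an infinite admissible extension S with D ⊆ S and S ∩ E = ∅ if and only if Y is infinite. -/
namespace AF

variable {α : Type*}

/-- `S` is conflict-free: no argument in `S` attacks another argument in `S`. -/
def ConflictFree (R : α → α → Prop) (S : Set α) : Prop :=
  ∀ a ∈ S, ∀ b ∈ S, ¬ R a b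

/-- `S` defends the argument `a`: every attacker of `a` is attacked by some element of `S`. -/
def Defends (R : α → α → Prop) (S : Set α) (a : α) : Prop :=
  ∀ x, R x a → ∃ y ∈ S, R y x

/-- `S` is admissible: conflict-free and defends each of its elements. -/
def Admissible (R : α → α → Prop) (S : Set α) : Prop :=
  ConflictFree R S ∧ ∀ a ∈ S, Defends R S a

/-- `S` is stable: conflict-free and attacks every argument outside of `S`. -/
def Stable (R : α → α → Prop) (S : Set α) : Prop :=
  ConflictFree R S ∧ ∀ a, a ∉ S → ∃ b ∈ S, R b a

/-- `S` is complete: conflict-free and equal to the set of arguments it defends. -/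
def Complete (R : α → α → Prop) (S : Set α) : Prop :=
  ConflictFree R S ∧ S = {a | Defends R S a}

/-- `S` is naive: conflict-free and no proper superset of `S` is conflict-free. -/
def Naive (R : α → α → Prop) (S : Set α) : Prop :=
  ConflictFree R S ∧ ∀ T : Set α, S ⊆ T → ConflictFree R T → T = S

/-- The framework is finitary: each argument has only finitely many attackers. -/
def Finitary (R : α → α → Prop) : Prop :=
  ∀ a : α, {x : α | R x a}.Finite

/-!
Choose for each `b ∈ Y` an admissible `X b` as in the definition of `Y`, and let `M` be the limit of
the `X b` along a non-principal ultrafilter `U` on `Y`. Finitely many attackers per argument means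
finitely many candidate defenders against each attack, so the pigeonhole principle for `U` makes `M`
admissible. Extend `M` to a maximal admissible set `N` avoiding `E`. If `N` were finite, it would
have finitely many attackers. An `X b` not contained in `N` contains one of them, since otherwise
`N ∪ X b` would contradict maximality; if this happened for `U`-almost all `b`, one attacker of `N`
would lie in `M ⊆ N`. Hence `b ∈ X b ⊆ N` for `U`-almost all `b`, which is impossible for finite
`N`.
-/

/-- The set of arguments that attack some element of `S`. It is used to express conflicts between
two sets of arguments as failures of disjointness. -/
def attackers (R : α → α → Prop) (S : Set α) : Set α :=
  ⋃ a ∈ S, {x | R x a}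

section

open Filter

variable {ι : Type*} {R : α → α → Prop} {S T E N : Set α}

theorem mem_attackers {x : α} : x ∈ attackers R S ↔ ∃ a ∈ S, R x a := by
  simp only [attackers, Set.mem_iUnion, Set.mem_ofPred_eq, exists_prop]

theorem conflictFree_iff_disjoint_attackers :
    ConflictFree R S ↔ Disjoint S (attackers R S) := by
  simp only [ConflictFree, Set.disjoint_left, mem_attackers, not_exists, not_and]

theorem Finitary.finite_attackers (hfin : Finitary R) (hS : S.Finite) : (attackers R S).Finite :=
  hS.biUnion fun a _ => hfin a

theorem Defends.mono {a : α} (h : Defends R S a) (hST : S ⊆ T) : Defends R T a := fun x hx =>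
  let ⟨y, hy, hyx⟩ := h x hx
  ⟨y, hST hy, hyx⟩

theorem Admissible.union (hS : Admissible R S) (hT : Admissible R T)
    (hTS : Disjoint T (attackers R S)) : Admissible R (S ∪ T) := by
  have not_attack : ∀ b ∈ T, ∀ a ∈ S, ¬ R b a := fun b hb a ha hba =>
    Set.disjoint_left.1 hTS hb (mem_attackers.2 ⟨a, ha, hba⟩)
  refine ⟨?_, ?_⟩
  · rintro a (ha | ha) b (hb | hb) hab
    · exact hS.1 a ha b hb hab
    · -- `T` defends `b`, so it would attack `a ∈ S`.
      obtain ⟨c, hc, hca⟩ := hT.2 b hb a hab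
      exact not_attack c hc a ha hca
    · exact not_attack a ha b hb hab
    · exact hT.1 a ha b hb hab
  · rintro a (ha | ha)
    · exact (hS.2 a ha).mono Set.subset_union_left
    · exact (hT.2 a ha).mono Set.subset_union_right

theorem ConflictFree.sUnion {c : Set (Set α)} (hdir : DirectedOn (· ⊆ ·) c)
    (hc : ∀ S ∈ c, ConflictFree R S) : ConflictFree R (⋃₀ c) := by
  rintro a ⟨S, hS, haS⟩ b ⟨T, hT, hbT⟩
  obtain ⟨V, hV, hSV, hTV⟩ := hdir S hS T hT
  exact hc V hV a (hSV haS) b (hTV hbT)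

theorem Admissible.sUnion {c : Set (Set α)} (hdir : DirectedOn (· ⊆ ·) c)
    (hc : ∀ S ∈ c, Admissible R S) : Admissible R (⋃₀ c) := by
  refine ⟨ConflictFree.sUnion hdir fun S hS => (hc S hS).1, ?_⟩
  rintro a ⟨S, hS, haS⟩
  exact ((hc S hS).2 a haS).mono (Set.subset_sUnion_of_mem hS)

theorem Admissible.exists_maximal_superset (hS : Admissible R S) (hSE : Disjoint S E) :
    ∃ N, S ⊆ N ∧ Maximal (fun T => Admissible R T ∧ Disjoint T E) N := by
  refine zorn_subset_nonempty {T | Admissible R T ∧ Disjoint T E} ?_ S ⟨hS, hSE⟩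
  intro c hc hchain _
  refine ⟨⋃₀ c, ⟨?_, ?_⟩, fun T => Set.subset_sUnion_of_mem⟩
  · exact Admissible.sUnion hchain.directedOn fun T hT => (hc hT).1
  · exact Set.disjoint_sUnion_left.2 fun T hT => (hc hT).2

theorem inter_attackers_nonempty_of_maximal
    (hN : Maximal (fun T => Admissible R T ∧ Disjoint T E) N)
    (hT : Admissible R T) (hTE : Disjoint T E) (hTN : ¬ T ⊆ N) :
    (T ∩ attackers R N).Nonempty := by
  rw [← Set.not_disjoint_iff_nonempty_inter]
  intro hdisj
  have hunion : Admissible R (N ∪ T) ∧ Disjoint (N ∪ T) E :=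
    ⟨hN.prop.1.union hT hdisj, hN.prop.2.union_left hTE⟩
  exact hTN (Set.subset_union_right.trans (hN.le_of_ge hunion Set.subset_union_left))

theorem inter_liminf_nonempty_of_finite {U : Ultrafilter ι} {X : ι → Set α} (hT : T.Finite)
    (h : ∀ᶠ i in U, (X i ∩ T).Nonempty) : (liminf X U ∩ T).Nonempty := by
  have hcover : ⋃ c ∈ T, {i | c ∈ X i} ∈ U := by
    filter_upwards [h] with i ⟨c, hcX, hcT⟩
    exact Set.mem_biUnion hcT hcX
  obtain ⟨c, hcT, hcX⟩ := (Ultrafilter.finite_biUnion_mem_iff hT).1 hcover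
  exact ⟨c, mem_liminf_iff_eventually_mem.2 hcX, hcT⟩

theorem ConflictFree.liminf {f : Filter ι} {X : ι → Set α}
    (hX : ∃ᶠ i in f, ConflictFree R (X i)) : ConflictFree R (liminf X f) := by
  intro a ha b hb
  rw [mem_liminf_iff_eventually_mem] at ha hb
  obtain ⟨i, hi, hai, hbi⟩ := (hX.and_eventually (ha.and hb)).exists
  exact hi a hai b hbi

theorem Defends.liminf (hfin : Finitary R) {U : Ultrafilter ι} {X : ι → Set α} {a : α}
    (hX : ∀ᶠ i in U, Defends R (X i) a) : Defends R (liminf X U) a := by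
  intro x hx
  refine inter_liminf_nonempty_of_finite (hfin x) ?_
  filter_upwards [hX] with i hi
  exact hi x hx

theorem Admissible.liminf (hfin : Finitary R) {U : Ultrafilter ι} {X : ι → Set α}
    (hX : ∀ᶠ i in U, Admissible R (X i)) : Admissible R (liminf X U) := by
  refine ⟨ConflictFree.liminf (hX.mono fun i hi => hi.1).frequently,
    fun a ha => Defends.liminf hfin ?_⟩
  filter_upwards [hX, mem_liminf_iff_eventually_mem.1 ha] with i hi hai
  exact hi.2 a hai

theorem disjoint_liminf {f : Filter ι} {X : ι → Set α} (hX : ∃ᶠ i in f, Disjoint (X i) E) :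
    Disjoint (liminf X f) E :=
  Set.subset_compl_iff_disjoint_right.1 <|
    liminf_le_of_frequently_le' (hX.mono fun _ hi => hi.subset_compl_right)

theorem eventually_subset_of_maximal (hfin : Finitary R) {U : Ultrafilter ι} {X : ι → Set α}
    (hX : ∀ᶠ i in U, Admissible R (X i)) (hXE : ∀ᶠ i in U, Disjoint (X i) E)
    (hN : Maximal (fun T => Admissible R T ∧ Disjoint T E) N) (hNfin : N.Finite)
    (hXN : liminf X U ⊆ N) : ∀ᶠ i in U, X i ⊆ N := by
  by_contra hnot
  have hmeet : ∀ᶠ i in U, (X i ∩ attackers R N).Nonempty := by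
    filter_upwards [hX, hXE, Ultrafilter.eventually_not.2 hnot] with i hi hiE hiN
    exact inter_attackers_nonempty_of_maximal hN hi hiE hiN
  obtain ⟨c, hcX, hcN⟩ :=
    inter_liminf_nonempty_of_finite (hfin.finite_attackers hNfin) hmeet
  exact Set.disjoint_left.1 (conflictFree_iff_disjoint_attackers.1 hN.prop.1.1) (hXN hcX) hcN

theorem exists_infinite_admissible_of_injective [Infinite ι] (hfin : Finitary R) {X : ι → Set α}
    (hX : ∀ i, Admissible R (X i)) (hXE : ∀ i, Disjoint (X i) E) {b : ι → α}
    (hb : b.Injective) (hbX : ∀ i, b i ∈ X i) :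
    ∃ N, N.Infinite ∧ Admissible R N ∧ ⋂ i, X i ⊆ N ∧ Disjoint N E := by
  have hX' : ∀ᶠ i in hyperfilter ι, Admissible R (X i) := .of_forall hX
  have hXE' : ∀ᶠ i in hyperfilter ι, Disjoint (X i) E := .of_forall hXE
  obtain ⟨N, hlim, hN⟩ :=
    (Admissible.liminf hfin hX').exists_maximal_superset (disjoint_liminf hXE'.frequently)
  refine ⟨N, fun hNfin => ?_, hN.prop.1, ?_, hN.prop.2⟩
  · have hsub : ∀ᶠ i in hyperfilter ι, X i ⊆ N :=
      eventually_subset_of_maximal hfin hX' hXE' hN hNfin hlim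
    have hmem : b ⁻¹' N ∈ hyperfilter ι := hsub.mono fun i hi => hi (hbX i)
    exact notMem_hyperfilter_of_finite (hNfin.preimage hb.injOn) hmem
  · have hinter : ⋂ i, X i ⊆ liminf X (hyperfilter ι) :=
      le_liminf_of_le (h := .of_forall (Set.iInter_subset X))
    exact hinter.trans hlim

end

theorem infinitely_many_implies_one_infinite_admissible
    (R : α → α → Prop) (hfin : Finitary R) (D E : Set α) :
    (∃ S : Set α, S.Infinite ∧ Admissible R S ∧ D ⊆ S ∧ S ∩ E = ∅) ↔
      {b : α | ∃ X : Set α, Admissible R X ∧ D ∪ {b} ⊆ X ∧ E ∩ X = ∅}.Infinite := by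
  constructor
  · rintro ⟨S, hinf, hS, hDS, hSE⟩
    exact hinf.mono fun b hb => ⟨S, hS,
      Set.union_subset hDS (Set.singleton_subset_iff.2 hb), Set.inter_comm E S ▸ hSE⟩
  · intro hY
    have := hY.to_subtype
    choose X hX hDX hXE using
      fun b : {b : α | ∃ X : Set α, Admissible R X ∧ D ∪ {b} ⊆ X ∧ E ∩ X = ∅} => b.2
    obtain ⟨S, hinf, hS, hXS, hSE⟩ := exists_infinite_admissible_of_injective hfin hX
      (fun b => (Set.disjoint_iff_inter_eq_empty.2 (hXE b)).symm) Subtype.val_injective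
      (fun b => hDX b (.inr rfl))
    have hDS : D ⊆ S :=
      (Set.subset_iInter fun b => Set.subset_union_left.trans (hDX b)).trans hXS
    exact ⟨S, hinf, hS, hDS, hSE.inter_eq⟩

end AF
end

section
/- Let F = (A, R) be a finitary argumentation framework, and fix subsets D ⊆ A and E ⊆ A. Let Y be the set of arguments b ∈ A such that there exists a stable extension X with D ∪ {b} ⊆ X and E ∩ X = ∅. Then there exists an infinite stable extension S with D ⊆ S and S ∩ E = ∅ if and only if Y is infinite. -/
namespace AF

variable {α : Type*}

/-!
If some stable extension containing `D` and avoiding `E` is infinite, take it. Otherwise infinitely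
many of them are needed to cover the infinite set of arguments. Their limit `S` along a nonprincipal
ultrafilter (`liminf` in the lattice `Set α`) contains `D`, avoids `E`, and is stable because the
finitely many attackers of an argument are decided simultaneously. A finite `S` would be included
in almost every one of them, hence equal to it, since a stable extension is maximal conflict-free;
but the ultrafilter is nonprincipal.
-/

section

open Filter

variable {ι : Type*} {R : α → α → Prop}

theorem Stable.naive {S : Set α} (hS : Stable R S) : Naive R S := by
  refine ⟨hS.1, fun T hST hT => Set.Subset.antisymm (fun a haT => ?_) hST⟩
  by_contra haS
  obtain ⟨b, hbS, hba⟩ := hS.2 a haS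
  exact hT b (hST hbS) a haT hba

theorem conflictFree_liminf {l : Filter ι} {X : ι → Set α}
    (hX : ∃ᶠ i in l, ConflictFree R (X i)) : ConflictFree R (liminf X l) := by
  intro a ha b hb hab
  rw [mem_liminf_iff_eventually_mem] at ha hb
  obtain ⟨i, hi, hai, hbi⟩ := (hX.and_eventually (ha.and hb)).exists
  exact hi a hai b hbi hab

theorem stable_liminf (hfin : Finitary R) {U : Ultrafilter ι} {X : ι → Set α}
    (hX : ∀ᶠ i in U, Stable R (X i)) : Stable R (liminf X U) := by
  refine ⟨conflictFree_liminf (hX.mono fun _ hi => hi.1).frequently, fun a ha => ?_⟩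
  by_contra! hunattacked
  simp only [mem_liminf_iff_eventually_mem] at ha hunattacked
  have ha_notMem : ∀ᶠ i in U, a ∉ X i := Ultrafilter.eventually_not.2 ha
  have hattackers_notMem : ∀ᶠ i in U, ∀ b ∈ {b | R b a}, b ∉ X i :=
    (eventually_all_finite (hfin a)).2 fun b hba =>
      Ultrafilter.eventually_not.2 fun hb => hunattacked b hb hba
  obtain ⟨i, hi, hai, hattackers⟩ := (hX.and (ha_notMem.and hattackers_notMem)).exists
  obtain ⟨b, hbi, hba⟩ := hi.2 a hai
  exact hattackers b hba hbi

theorem eventually_eq_liminf_of_finite {l : Filter ι} {X : ι → Set α}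
    (hX : ∀ᶠ i in l, ConflictFree R (X i)) (hstable : Stable R (liminf X l))
    (hfinite : (liminf X l).Finite) : ∀ᶠ i in l, X i = liminf X l := by
  have hsubset : ∀ᶠ i in l, liminf X l ⊆ X i :=
    (eventually_all_finite hfinite).2 fun _ ha => mem_liminf_iff_eventually_mem.1 ha
  filter_upwards [hX, hsubset] with i hi hsub
  exact hstable.naive.2 (X i) hsub hi

theorem exists_infinite_stable_of_infinite (hfin : Finitary R) {K : Set (Set α)}
    (hK : ∀ X ∈ K, Stable R X) (hKinf : K.Infinite) :
    ∃ S : Set α, S.Infinite ∧ Stable R S ∧ ⋂₀ K ⊆ S ∧ S ⊆ ⋃₀ K := by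
  have : Infinite K := hKinf.to_subtype
  let S : Set α := liminf ((↑) : K → Set α) (hyperfilter K)
  have hS : Stable R S := stable_liminf hfin (.of_forall fun X => hK X X.2)
  refine ⟨S, fun hSfin => ?_, hS, fun a ha => ?_, fun a ha => ?_⟩
  · have heq : ∀ᶠ X : K in hyperfilter K, (X : Set α) = S :=
      eventually_eq_liminf_of_finite (.of_forall fun X => (hK X X.2).1) hS hSfin
    have hfiber : {X : K | (X : Set α) = S}.Finite :=
      (Set.finite_singleton S).preimage Subtype.val_injective.injOn
    exact hfiber.notMem_hyperfilter heq
  · exact mem_liminf_iff_eventually_mem.2 (.of_forall fun X => ha X X.2)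
  · obtain ⟨X, haX⟩ := (mem_liminf_iff_eventually_mem.1 ha).exists
    exact ⟨X, X.2, haX⟩

theorem exists_infinite_stable_of_infinite_sUnion (hfin : Finitary R) {K : Set (Set α)}
    (hK : ∀ X ∈ K, Stable R X) (hUnion : (⋃₀ K).Infinite) :
    ∃ S : Set α, S.Infinite ∧ Stable R S ∧ ⋂₀ K ⊆ S ∧ S ⊆ ⋃₀ K := by
  by_cases hmem : ∃ X ∈ K, X.Infinite
  · obtain ⟨X, hXK, hXinf⟩ := hmem
    exact ⟨X, hXinf, hK X hXK, Set.sInter_subset_of_mem hXK, Set.subset_sUnion_of_mem hXK⟩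
  · have hmem_finite : ∀ X ∈ K, X.Finite := by simpa using hmem
    exact exists_infinite_stable_of_infinite hfin hK fun hKfin =>
      hUnion (hKfin.sUnion hmem_finite)

end

theorem infinitely_many_implies_one_infinite_stable
    (R : α → α → Prop) (hfin : Finitary R) (D E : Set α) :
    (∃ S : Set α, S.Infinite ∧ Stable R S ∧ D ⊆ S ∧ S ∩ E = ∅) ↔
      {b : α | ∃ X : Set α, Stable R X ∧ D ∪ {b} ⊆ X ∧ E ∩ X = ∅}.Infinite := by
  constructor
  · rintro ⟨S, hSinf, hS, hDS, hSE⟩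
    exact hSinf.mono fun b hb => ⟨S, hS,
      Set.union_subset hDS (Set.singleton_subset_iff.2 hb), Set.inter_comm S E ▸ hSE⟩
  · intro hY
    let K : Set (Set α) := {X | Stable R X ∧ D ⊆ X ∧ Disjoint X E}
    have hYK : {b | ∃ X, Stable R X ∧ D ∪ {b} ⊆ X ∧ E ∩ X = ∅} ⊆ ⋃₀ K := by
      rintro b ⟨X, hX, hDbX, hEX⟩
      obtain ⟨hDX, hbX⟩ := Set.union_subset_iff.1 hDbX
      exact ⟨X, ⟨hX, hDX, (Set.disjoint_iff_inter_eq_empty.2 hEX).symm⟩, hbX rfl⟩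
    obtain ⟨S, hSinf, hS, hKS, hSK⟩ :=
      exists_infinite_stable_of_infinite_sUnion hfin (fun X (hX : X ∈ K) => hX.1) (hY.mono hYK)
    have hDS : D ⊆ S := (Set.subset_sInter fun X (hX : X ∈ K) => hX.2.1).trans hKS
    have hSE : Disjoint S E :=
      (Set.disjoint_sUnion_left.2 fun X (hX : X ∈ K) => hX.2.2).mono_left hSK
    exact ⟨S, hSinf, hS, hDS, hSE.inter_eq⟩

end AF
end

section
/- Let F = (A, R) be a finitary argumentation framework, let C be an index set, and for each b ∈ C let X_b be an admissible extension of F. Suppose S ⊆ A is such that the set {b ∈ C : S ⊆ X_b} is infinite, and let y ∈ S and let z be an argument with z ↝ y. Then there exists an argument x with x ↝ z such that the set {b ∈ C : S ∪ {x} ⊆ X_b} is infinite. -/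
namespace AF

variable {α : Type*}

section

variable {ι : Type*} {R : α → α → Prop} {C : Set ι} {X : ι → Set α} {S : Set α} {y z : α}

theorem exists_infinite_of_subset_biUnion {s : Set ι} {t : Set α} {f : α → Set ι}
    (hs : s.Infinite) (ht : t.Finite) (hst : s ⊆ ⋃ x ∈ t, f x) : ∃ x ∈ t, (f x).Infinite := by
  by_contra! hf
  exact hs ((ht.biUnion hf).subset hst)

theorem setOf_subset_subset_biUnion_attackers
    (hdef : ∀ b ∈ C, y ∈ X b → Defends R (X b) y) (hy : y ∈ S) (hz : R z y) :
    {b ∈ C | S ⊆ X b} ⊆ ⋃ x ∈ {x | R x z}, {b ∈ C | S ∪ {x} ⊆ X b} := by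
  rintro b ⟨hbC, hSb⟩
  obtain ⟨x, hxb, hxz⟩ := hdef b hbC (hSb hy) z hz
  exact Set.mem_biUnion hxz ⟨hbC, Set.union_subset hSb (Set.singleton_subset_iff.mpr hxb)⟩

theorem make_it_admissible_general (hfin : {x | R x z}.Finite)
    (hdef : ∀ b ∈ C, y ∈ X b → Defends R (X b) y)
    (hS : {b ∈ C | S ⊆ X b}.Infinite) (hy : y ∈ S) (hz : R z y) :
    ∃ x, R x z ∧ {b ∈ C | S ∪ {x} ⊆ X b}.Infinite :=
  exists_infinite_of_subset_biUnion hS hfin (setOf_subset_subset_biUnion_attackers hdef hy hz)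

end

theorem make_it_admissible {ι : Type*}
    (R : α → α → Prop) (hfin : Finitary R)
    (C : Set ι) (X : ι → Set α)
    (hXadm : ∀ b ∈ C, Admissible R (X b))
    (S : Set α) (hS : {b ∈ C | S ⊆ X b}.Infinite)
    (y : α) (hy : y ∈ S) (z : α) (hz : R z y) :
    ∃ x : α, R x z ∧ {b ∈ C | S ∪ {x} ⊆ X b}.Infinite :=
  make_it_admissible_general (hfin z) (fun b hb => (hXadm b hb).2 y) hS hy hz

end AF
end

section
/- Let F = (A, R) be a finitary argumentation framework, let C be an index set, and for each b ∈ C let X_b be a stable extension of F. Suppose S ⊆ A is such that the set {b ∈ C : S ⊆ X_b} is infinite, and let z be any argument. Then there exists an argument x with either x = z or x ↝ z, such that the set {b ∈ C : S ∪ {x} ⊆ X_b} is infinite. -/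
namespace AF

variable {α : Type*}

theorem exists_infinite_sep_of_forall_exists_mem {ι : Type*} {I : Set ι} (hI : I.Infinite)
    {T : Set α} (hT : T.Finite) {p : ι → α → Prop} (hp : ∀ b ∈ I, ∃ x ∈ T, p b x) :
    ∃ x ∈ T, {b ∈ I | p b x}.Infinite := by
  by_contra! hfinite
  have hcover : I ⊆ ⋃ x ∈ T, {b ∈ I | p b x} := by
    intro b hb
    obtain ⟨x, hxT, hbx⟩ := hp b hb
    exact Set.mem_biUnion hxT ⟨hb, hbx⟩
  exact hI ((hT.biUnion hfinite).subset hcover)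

theorem make_it_stable_general {ι : Type*} {R : α → α → Prop} {z : α}
    (hz : {x | R x z}.Finite) {C : Set ι} {X : ι → Set α}
    (hX : ∀ b ∈ C, z ∉ X b → ∃ x ∈ X b, R x z)
    {S : Set α} (hS : {b ∈ C | S ⊆ X b}.Infinite) :
    ∃ x : α, (x = z ∨ R x z) ∧ {b ∈ C | S ∪ {x} ⊆ X b}.Infinite := by
  have hmeets : ∀ b ∈ {b ∈ C | S ⊆ X b}, ∃ x ∈ insert z {x | R x z}, x ∈ X b := by
    rintro b ⟨hb, -⟩
    by_cases hzb : z ∈ X b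
    · exact ⟨z, Set.mem_insert z _, hzb⟩
    · obtain ⟨x, hxb, hxz⟩ := hX b hb hzb
      exact ⟨x, Set.mem_insert_of_mem z hxz, hxb⟩
  obtain ⟨x, hxz, hinf⟩ :=
    exists_infinite_sep_of_forall_exists_mem hS (hz.insert z) hmeets
  refine ⟨x, hxz, hinf.mono ?_⟩
  rintro b ⟨⟨hb, hSb⟩, hxb⟩
  exact ⟨hb, Set.union_subset hSb (Set.singleton_subset_iff.mpr hxb)⟩

theorem make_it_stable {ι : Type*}
    (R : α → α → Prop) (hfin : Finitary R)
    (C : Set ι) (X : ι → Set α)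
    (hXstb : ∀ b ∈ C, Stable R (X b))
    (S : Set α) (hS : {b ∈ C | S ⊆ X b}.Infinite)
    (z : α) :
    ∃ x : α, (x = z ∨ R x z) ∧ {b ∈ C | S ∪ {x} ⊆ X b}.Infinite :=
  make_it_stable_general (hfin z) (fun b hb => (hXstb b hb).2 z) hS

end AF
end

section
/- Let F = (A, R) be an argumentation framework and let a ∈ A. Then a belongs to every naive extension of F if and only if a does not attack itself (¬ a ↝ a) and for every argument y with ¬ y ↝ y the set {y, a} is conflict-free. -/
namespace AF

variable {α : Type*}

/-!
By Zorn's lemma every conflict-free set extends to a naive one, so `a` lies in every naive extension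
exactly when adjoining `a` preserves conflict-freeness. A conflict involves at most two arguments,
hence it suffices to adjoin `a` to sets with at most one element.
-/

section

variable {R : α → α → Prop} {S T : Set α} {a : α}

theorem ConflictFree.mono (hT : ConflictFree R T) (hST : S ⊆ T) : ConflictFree R S :=
  fun x hx y hy => hT x (hST hx) y (hST hy)

theorem conflictFree_empty : ConflictFree R ∅ :=
  fun _ hx => hx.elim

theorem conflictFree_singleton_iff : ConflictFree R {a} ↔ ¬ R a a := by
  simp only [ConflictFree, Set.mem_singleton_iff, forall_eq]

theorem conflictFree_insert_iff :
    ConflictFree R (insert a S) ↔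
      ¬ R a a ∧ ConflictFree R S ∧ ∀ y ∈ S, ¬ R a y ∧ ¬ R y a := by
  simp only [ConflictFree, Set.forall_mem_insert]
  grind

theorem conflictFree_sUnion_of_directedOn {c : Set (Set α)} (hc : DirectedOn (· ⊆ ·) c)
    (hcf : ∀ S ∈ c, ConflictFree R S) : ConflictFree R (⋃₀ c) := by
  rintro x ⟨S, hS, hxS⟩ y ⟨T, hT, hyT⟩
  obtain ⟨U, hU, hSU, hTU⟩ := hc S hS T hT
  exact hcf U hU x (hSU hxS) y (hTU hyT)

theorem naive_iff_maximal : Naive R S ↔ Maximal (ConflictFree R) S :=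
  and_congr_right fun _ => forall_congr' fun _ =>
    ⟨fun h hT hST => (h hST hT).subset, fun h hST hT => (h hT hST).antisymm hST⟩

theorem ConflictFree.exists_naive_superset (hS : ConflictFree R S) : ∃ T, S ⊆ T ∧ Naive R T := by
  simp only [naive_iff_maximal]
  refine zorn_subset_nonempty {T | ConflictFree R T} (fun c hcf hc _ => ?_) S hS
  exact ⟨⋃₀ c, conflictFree_sUnion_of_directedOn hc.directedOn hcf,
    fun _ => Set.subset_sUnion_of_mem⟩

theorem Naive.mem_of_conflictFree_insert (hS : Naive R S) (ha : ConflictFree R (insert a S)) :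
    a ∈ S :=
  Set.insert_eq_self.mp (hS.2 _ (Set.subset_insert a S) ha)

theorem mem_every_naive_iff_forall_conflictFree_insert :
    (∀ S, Naive R S → a ∈ S) ↔ ∀ S, ConflictFree R S → ConflictFree R (insert a S) := by
  constructor
  · intro ha S hS
    obtain ⟨T, hST, hT⟩ := hS.exists_naive_superset
    exact hT.1.mono (Set.insert_subset (ha T hT) hST)
  · exact fun ha S hS => hS.mem_of_conflictFree_insert (ha S hS.1)

end

theorem mem_every_naive_iff
    (R : α → α → Prop) (a : α) :
    (∀ S : Set α, Naive R S → a ∈ S) ↔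
      (¬ R a a ∧ ∀ y : α, ¬ R y y → ConflictFree R {y, a}) := by
  rw [mem_every_naive_iff_forall_conflictFree_insert]
  constructor
  · intro h
    refine ⟨(conflictFree_insert_iff.mp (h ∅ conflictFree_empty)).1, fun y hy => ?_⟩
    rw [Set.pair_comm]
    exact h {y} (conflictFree_singleton_iff.mpr hy)
  · rintro ⟨ha, hpair⟩ S hS
    refine conflictFree_insert_iff.mpr ⟨ha, hS, fun y hy => ?_⟩
    have hya : ConflictFree R {y, a} := hpair y (hS y hy y hy)
    exact ⟨hya a (.inr rfl) y (.inl rfl), hya y (.inl rfl) a (.inr rfl)⟩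

end AF
end

section
/- Let F be an argumentation framework whose set of arguments is ℕ, and let D, E ⊆ ℕ. Then there exists a tree T ⊆ List ℕ such that the set of paths through T is in bijection with the set of admissible extensions S of F satisfying D ⊆ S and S ∩ E = ∅. Moreover, if F is finitary, then T can be chosen to be finitely branching. -/
namespace AF

variable {α : Type*}

/-- A tree: a set of finite strings closed under prefixes. -/
def IsTree (T : Set (List ℕ)) : Prop :=
  ∀ σ ∈ T, ∀ τ : List ℕ, τ <+: σ → τ ∈ T

/-- `π` is a path through `T`: all of its finite initial segments belong to `T`. -/
def IsPath (T : Set (List ℕ)) (π : ℕ → ℕ) : Prop :=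
  ∀ n : ℕ, (List.range n).map π ∈ T

/-- `T` is finitely branching: every node has only finitely many immediate successors. -/
def FinitelyBranching (T : Set (List ℕ)) : Prop :=
  ∀ σ ∈ T, {n : ℕ | σ ++ [n] ∈ T}.Finite

/-! Label each argument `x` by whether it lies in `S` and, if not, by the least element of `S`
attacking it, if there is one. The labelling determines `S`. Since it names an attacker, the
unbounded existential quantifier in admissibility becomes a condition on two labels at a time, so
the labellings of the extensions in question form a closed subset of Baire space; and the paths
through the tree of initial segments of a closed set are exactly its members. If each argument has
finitely many attackers, it has finitely many possible labels, and the tree is finitely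
branching. -/

open Set

theorem isClosed_setOf_apply_apply {ι : Type*} {X : ι → Type*} [∀ i, TopologicalSpace (X i)]
    [∀ i, DiscreteTopology (X i)] (i j : ι) (p : X i → X j → Prop) :
    IsClosed {f : ∀ i, X i | p (f i) (f j)} := by
  have hcont : Continuous fun f : ∀ i, X i => (f i, f j) :=
    (continuous_apply i).prodMk (continuous_apply j)
  exact (isClosed_discrete {q : X i × X j | p q.1 q.2}).preimage hcont

/-- The tree of all finite initial segments of the sequences in `C`, by which a closed set
of sequences is realised as a set of paths. -/
def prefixTree (C : Set (ℕ → ℕ)) : Set (List ℕ) :=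
  {σ | ∃ f ∈ C, (List.range σ.length).map f = σ}

section PrefixTree

variable {C : Set (ℕ → ℕ)}

theorem isTree_prefixTree : IsTree (prefixTree C) := by
  rintro σ ⟨f, hf, hσ⟩ τ hτ
  refine ⟨f, hf, ?_⟩
  calc (List.range τ.length).map f
      = ((List.range σ.length).map f).take τ.length := by
        rw [← List.map_take, List.take_range, min_eq_left hτ.length_le]
    _ = τ := by rw [hσ, ← List.prefix_iff_eq_take.mp hτ]

theorem map_range_mem_prefixTree_iff {π : ℕ → ℕ} {n : ℕ} :
    (List.range n).map π ∈ prefixTree C ↔ (C ∩ PiNat.cylinder π n).Nonempty := by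
  simp [prefixTree, Set.Nonempty]

theorem isPath_prefixTree_iff_mem_closure {π : ℕ → ℕ} :
    IsPath (prefixTree C) π ↔ π ∈ closure C := by
  simp only [IsPath, map_range_mem_prefixTree_iff]
  refine ⟨fun h => ?_, fun h n => ?_⟩
  · by_contra hπ
    obtain ⟨n, hn⟩ := PiNat.exists_disjoint_cylinder isClosed_closure hπ
    exact ((h n).mono (inter_subset_inter_left _ subset_closure)).not_disjoint hn
  · rw [inter_comm]
    exact mem_closure_iff.mp h _ (PiNat.isOpen_cylinder _ π n) (PiNat.self_mem_cylinder π n)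

theorem finitelyBranching_prefixTree (hC : ∀ n, ((fun f : ℕ → ℕ => f n) '' C).Finite) :
    FinitelyBranching (prefixTree C) := by
  refine fun σ _ => (hC σ.length).subset ?_
  rintro n ⟨f, hf, hfn⟩
  rw [List.length_append, List.length_singleton, List.range_succ, List.map_append] at hfn
  exact ⟨f, hf, List.singleton_inj.mp (List.append_inj' hfn rfl).2⟩

end PrefixTree

section Label

variable {R : ℕ → ℕ → Prop} {S : Set ℕ} {x y : ℕ}

open Classical in
/-- The labelling of arguments by which an extension `S` is encoded as a point of Baire space:
`0` marks the members of `S`, `y + 2` the non-members whose least attacker in `S` is `y`, and `1`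
the non-members that `S` does not attack. -/
noncomputable def label (R : ℕ → ℕ → Prop) (S : Set ℕ) (x : ℕ) : ℕ :=
  if x ∈ S then 0 else if {y | y ∈ S ∧ R y x}.Nonempty then sInf {y | y ∈ S ∧ R y x} + 2 else 1

theorem label_eq_zero_iff : label R S x = 0 ↔ x ∈ S := by
  unfold label
  split_ifs <;> simp_all

theorem label_eq_one_iff : label R S x = 1 ↔ x ∉ S ∧ ∀ y ∈ S, ¬ R y x := by
  unfold label
  split_ifs <;> simp_all [Set.Nonempty]

theorem label_eq_add_two_iff :
    label R S x = y + 2 ↔ x ∉ S ∧ IsLeast {y | y ∈ S ∧ R y x} y := by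
  unfold label
  split_ifs with hx hattacked
  · simp [hx]
  · have hleast := isLeast_csInf hattacked
    rw [Nat.add_right_cancel_iff]
    exact ⟨fun h => ⟨hx, h ▸ hleast⟩, fun h => hleast.unique h.2⟩
  · exact iff_of_false (by lia) fun h => hattacked h.2.nonempty

theorem two_le_label_iff : 2 ≤ label R S x ↔ x ∉ S ∧ ∃ y ∈ S, R y x := by
  have hne : 2 ≤ label R S x ↔ label R S x ≠ 0 ∧ label R S x ≠ 1 := by lia
  rw [hne, Ne, Ne, label_eq_zero_iff, label_eq_one_iff]
  push Not
  exact and_congr_right fun hx => imp_iff_right hx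

theorem label_injective (R : ℕ → ℕ → Prop) : Function.Injective (label R) := by
  intro S S' h
  ext x
  rw [← label_eq_zero_iff (R := R), h, label_eq_zero_iff]

theorem finite_range_label_apply (hx : {y | R y x}.Finite) : (range (label R · x)).Finite := by
  refine ((toFinite {0, 1}).union (hx.image (· + 2))).subset ?_
  rintro _ ⟨S, rfl⟩
  rcases hlabel : label R S x with _ | _ | y
  · exact Or.inl (Or.inl hlabel)
  · exact Or.inl (Or.inr hlabel)
  · exact Or.inr ⟨y, (label_eq_add_two_iff.mp hlabel).2.1.2, hlabel.symm⟩

/-- Each clause involves only the labels of `x` and `y`, which is what makes the range closed; the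
bound `π x ≤ y + 2` expresses that the attacker named by `π x` is the least one. -/
theorem mem_range_label_iff {π : ℕ → ℕ} :
    π ∈ range (label R) ↔
      ∀ x y, (π y = 0 → R y x → π x ≠ 1 ∧ π x ≤ y + 2) ∧ (π x = y + 2 → π y = 0 ∧ R y x) := by
  constructor
  · rintro ⟨S, rfl⟩ x y
    refine ⟨fun hy hyx => ?_, fun hxy => ?_⟩
    · rw [label_eq_zero_iff] at hy
      refine ⟨fun h => (label_eq_one_iff.mp h).2 y hy hyx, ?_⟩
      rcases hlabel : label R S x with _ | _ | z
      · lia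
      · lia
      · exact Nat.add_le_add_right ((label_eq_add_two_iff.mp hlabel).2.2 ⟨hy, hyx⟩) 2
    · rw [label_eq_zero_iff]
      exact (label_eq_add_two_iff.mp hxy).2.1
  · refine fun h => ⟨{x | π x = 0}, funext fun x => ?_⟩
    rcases hπ : π x with _ | _ | y
    · exact label_eq_zero_iff.mpr hπ
    · exact label_eq_one_iff.mpr ⟨by simp [hπ], fun y hy hyx => ((h x y).1 hy hyx).1 hπ⟩
    · refine label_eq_add_two_iff.mpr ⟨by simp [hπ], (h x y).2 hπ, fun z hz => ?_⟩
      have hle := ((h x z).1 hz.1 hz.2).2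
      lia

theorem admissible_iff_two_le_label :
    Admissible R S ↔ ∀ x a, R x a → label R S a = 0 → 2 ≤ label R S x := by
  simp only [label_eq_zero_iff, two_le_label_iff]
  constructor
  · rintro ⟨hfree, hdef⟩ x a hxa ha
    exact ⟨fun hx => hfree x hx a ha hxa, hdef a ha x hxa⟩
  · exact fun h => ⟨fun x hx a ha hxa => (h x a hxa ha).1 hx, fun a ha x hxa => (h x a hxa ha).2⟩

end Label

theorem isClosed_range_label (R : ℕ → ℕ → Prop) : IsClosed (range (label R)) := by
  have hrange : range (label R) = ⋂ x, ⋂ y, {π : ℕ → ℕ |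
      (π y = 0 → R y x → π x ≠ 1 ∧ π x ≤ y + 2) ∧ (π x = y + 2 → π y = 0 ∧ R y x)} := by
    ext π
    simp only [mem_range_label_iff, mem_iInter, mem_ofPred_eq]
  rw [hrange]
  exact isClosed_iInter fun x => isClosed_iInter fun y =>
    isClosed_setOf_apply_apply (X := fun _ => ℕ) x y fun m n =>
      (n = 0 → R y x → m ≠ 1 ∧ m ≤ y + 2) ∧ (m = y + 2 → n = 0 ∧ R y x)

theorem isClosed_label_image_admissible (R : ℕ → ℕ → Prop) :
    IsClosed (label R '' {S | Admissible R S}) := by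
  have hpreimage : {S | Admissible R S} =
      label R ⁻¹' ⋂ x, ⋂ a, {π | R x a → π a = 0 → 2 ≤ π x} := by
    ext S
    simp only [mem_ofPred_eq, admissible_iff_two_le_label, mem_preimage, mem_iInter]
  rw [hpreimage, image_preimage_eq_inter_range]
  refine IsClosed.inter ?_ (isClosed_range_label R)
  exact isClosed_iInter fun x => isClosed_iInter fun a =>
    isClosed_setOf_apply_apply (X := fun _ => ℕ) x a fun m n => R x a → n = 0 → 2 ≤ m

theorem isClosed_label_image_admissible_subset_disjoint (R : ℕ → ℕ → Prop) (D E : Set ℕ) :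
    IsClosed (label R '' {S | Admissible R S ∧ D ⊆ S ∧ S ∩ E = ∅}) := by
  have hpreimage : {S : Set ℕ | D ⊆ S ∧ S ∩ E = ∅} =
      label R ⁻¹' (D.pi (fun _ => {0}) ∩ E.pi fun _ => {0}ᶜ) := by
    ext S
    simp only [mem_ofPred_eq, mem_preimage, mem_inter_iff, mem_pi, mem_singleton_iff,
      mem_compl_iff, label_eq_zero_iff, ← disjoint_iff_inter_eq_empty, disjoint_right, subset_def]
  rw [ofPred_and, hpreimage, image_inter_preimage]
  exact (isClosed_label_image_admissible R).inter
    ((isClosed_set_pi fun _ _ => isClosed_discrete _).inter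
      (isClosed_set_pi fun _ _ => isClosed_discrete _))

theorem tree_for_admissible (R : ℕ → ℕ → Prop) (D E : Set ℕ) :
    ∃ T : Set (List ℕ), IsTree T ∧
      Nonempty ({π : ℕ → ℕ // IsPath T π} ≃
        {S : Set ℕ // Admissible R S ∧ D ⊆ S ∧ S ∩ E = ∅}) ∧
      (Finitary R → FinitelyBranching T) := by
  set extensions : Set (Set ℕ) := {S | Admissible R S ∧ D ⊆ S ∧ S ∩ E = ∅}
  have hclosed : IsClosed (label R '' extensions) :=
    isClosed_label_image_admissible_subset_disjoint R D E
  have hpath (π : ℕ → ℕ) : IsPath (prefixTree (label R '' extensions)) π ↔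
      π ∈ label R '' extensions := by
    rw [isPath_prefixTree_iff_mem_closure, hclosed.closure_eq]
  refine ⟨prefixTree (label R '' extensions), isTree_prefixTree, ⟨?_⟩, fun hR => ?_⟩
  · exact (Equiv.subtypeEquivRight hpath).trans
      (Equiv.Set.image (label R) extensions (label_injective R)).symm
  · refine finitelyBranching_prefixTree fun x => (finite_range_label_apply (hR x)).subset ?_
    rw [image_image]
    exact image_subset_range _ _

end AF
end

section
/- Let F be an argumentation framework whose set of arguments is ℕ, and let D, E ⊆ ℕ. Then there exists a tree T ⊆ List ℕ such that the set of paths through T is in bijection with the set of stable extensions S of F satisfying D ⊆ S and S ∩ E = ∅. Moreover, if F is finitary, then T can be chosen to be finitely branching. -/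
namespace AF

variable {α : Type*}

/-!
Code a stable extension `S` by the function that fixes every element of `S` and sends every other
argument to its least attacker in `S`. Then `S` is the set of fixed points of its code, and being
a code is a conjunction of conditions that each involve only finitely many values, so the codes
form a closed subset of Baire space. A closed set of sequences is the set of paths through the tree
of its initial segments. The value of a code at `i` is `i` or an attacker of `i`, so this tree is
finitely branching when the framework is finitary.
-/

section InitialSegments

/-- The tree of all finite initial segments of the sequences in `C`. -/
def initialSegments (C : Set (ℕ → ℕ)) : Set (List ℕ) :=
  {σ | ∃ π ∈ C, ∃ n, (List.range n).map π = σ}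

theorem isTree_initialSegments (C : Set (ℕ → ℕ)) : IsTree (initialSegments C) := by
  rintro _ ⟨π, hπ, n, rfl⟩ τ hτ
  refine ⟨π, hπ, min τ.length n, ?_⟩
  rw [List.prefix_iff_eq_take.mp hτ, ← List.map_take, List.take_range]
  simp

variable {C : Set (ℕ → ℕ)}

theorem map_range_mem_initialSegments_iff {π : ℕ → ℕ} {n : ℕ} :
    (List.range n).map π ∈ initialSegments C ↔ ∃ ρ ∈ C, ρ ∈ PiNat.cylinder π n := by
  constructor
  · rintro ⟨ρ, hρ, m, h⟩
    obtain rfl : m = n := by simpa using congrArg List.length h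
    exact ⟨ρ, hρ, by simpa using h⟩
  · rintro ⟨ρ, hρ, h⟩
    exact ⟨ρ, hρ, n, by simpa using h⟩

theorem isPath_initialSegments_iff_mem_closure {π : ℕ → ℕ} :
    IsPath (initialSegments C) π ↔ π ∈ closure C := by
  simp only [IsPath, map_range_mem_initialSegments_iff,
    (PiNat.isTopologicalBasis_cylinders fun _ ↦ ℕ).mem_closure_iff]
  constructor
  · rintro h _ ⟨ρ, n, rfl⟩ hπ
    obtain ⟨c, hc, hcπ⟩ := h n
    exact ⟨c, PiNat.mem_cylinder_iff_eq.mp hπ ▸ hcπ, hc⟩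
  · intro h n
    obtain ⟨c, hcπ, hc⟩ := h _ ⟨π, n, rfl⟩ (PiNat.self_mem_cylinder π n)
    exact ⟨c, hc, hcπ⟩

theorem finitelyBranching_initialSegments (hC : ∀ i, (Function.eval i '' C).Finite) :
    FinitelyBranching (initialSegments C) := by
  intro σ _
  refine (hC σ.length).subset ?_
  rintro k ⟨π, hπ, n, h⟩
  obtain rfl : n = σ.length + 1 := by simpa using congrArg List.length h
  rw [List.range_succ, List.map_append] at h
  exact ⟨π, hπ, by simpa using (List.append_inj' h rfl).2⟩

end InitialSegments

section StableCode

open Function Set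

variable {R : α → α → Prop} {S : Set α} {c : α → α}

/-- `c` codes a stable extension: the extension is the set of fixed points of `c`, and every other
argument is sent by `c` to its least attacker in the extension. Choosing the least attacker makes
the code of an extension unique. -/
structure IsStableCode [LE α] (R : α → α → Prop) (c : α → α) : Prop where
  conflictFree : ConflictFree R (fixedPoints c)
  isLeast : ∀ i ∉ fixedPoints c, IsLeast {b ∈ fixedPoints c | R b i} (c i)

theorem isStableCode_iff [LE α] : IsStableCode R c ↔ ConflictFree R (fixedPoints c) ∧
    ∀ i ∉ fixedPoints c, IsLeast {b ∈ fixedPoints c | R b i} (c i) :=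
  ⟨fun hc ↦ ⟨hc.conflictFree, hc.isLeast⟩, fun hc ↦ ⟨hc.1, hc.2⟩⟩

theorem IsStableCode.stable [LE α] (hc : IsStableCode R c) : Stable R (fixedPoints c) :=
  ⟨hc.conflictFree, fun i hi ↦ ⟨c i, (hc.isLeast i hi).1⟩⟩

theorem IsStableCode.apply_mem_insert_attackers [LE α] (hc : IsStableCode R c) (i : α) :
    c i ∈ insert i {b | R b i} := by
  by_cases hi : i ∈ fixedPoints c
  · exact Or.inl hi
  · exact Or.inr (hc.isLeast i hi).1.2

theorem injOn_fixedPoints_isStableCode [PartialOrder α] (R : α → α → Prop) :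
    InjOn fixedPoints {c | IsStableCode R c} := by
  intro c hc d hd h
  funext i
  by_cases hi : i ∈ fixedPoints c
  · have hi' : i ∈ fixedPoints d := h ▸ hi
    exact hi.eq.trans hi'.eq.symm
  · have hi' : i ∉ fixedPoints d := h ▸ hi
    exact (hc.isLeast i hi).unique (h ▸ hd.isLeast i hi')

theorem Stable.exists_isStableCode [LinearOrder α] [WellFoundedLT α] (hS : Stable R S) :
    ∃ c, IsStableCode R c ∧ fixedPoints c = S := by
  classical
  have exists_isLeast_attacker (i : α) (hi : i ∉ S) : ∃ b, IsLeast {b ∈ S | R b i} b :=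
    (exists_minimal_of_wellFoundedLT _ (hS.2 i hi)).imp fun _ ↦ minimal_iff_isLeast.mp
  choose! leastAttacker isLeast_leastAttacker using exists_isLeast_attacker
  let c : α → α := fun i ↦ if i ∈ S then i else leastAttacker i
  have fixedPoints_c : fixedPoints c = S := by
    ext i
    by_cases hi : i ∈ S
    · simp [c, IsFixedPt, hi]
    · have : leastAttacker i ≠ i := fun h ↦ hi (h ▸ (isLeast_leastAttacker i hi).1.1)
      simp [c, IsFixedPt, hi, this]
  refine ⟨c, ⟨fixedPoints_c.symm ▸ hS.1, fun i hi ↦ ?_⟩, fixedPoints_c⟩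
  rw [fixedPoints_c] at hi ⊢
  simpa only [c, if_neg hi] using isLeast_leastAttacker i hi

theorem bijOn_fixedPoints_isStableCode [LinearOrder α] [WellFoundedLT α] (R : α → α → Prop) :
    BijOn fixedPoints {c | IsStableCode R c} {S | Stable R S} :=
  ⟨fun _ hc ↦ hc.stable, injOn_fixedPoints_isStableCode R, fun _ hS ↦ hS.exists_isStableCode⟩

variable [TopologicalSpace α] [DiscreteTopology α]

theorem isClopen_setOfPred_apply_eq {β : Type*} (i : β) (k : α) :
    IsClopen {c : β → α | c i = k} :=
  (isClopen_discrete {k}).preimage (continuous_apply i)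

theorem isClopen_setOfPred_mem_fixedPoints (i : α) : IsClopen {c : α → α | i ∈ fixedPoints c} :=
  isClopen_setOfPred_apply_eq i i

theorem isClosed_setOfPred_subset_fixedPoints (D : Set α) :
    IsClosed {c : α → α | D ⊆ fixedPoints c} := by
  simp only [subset_def, ofPred_forall]
  exact isClosed_biInter fun i _ ↦ (isClopen_setOfPred_mem_fixedPoints i).isClosed

theorem isClosed_setOfPred_fixedPoints_inter_eq_empty (E : Set α) :
    IsClosed {c : α → α | fixedPoints c ∩ E = ∅} := by
  simp only [← disjoint_iff_inter_eq_empty, disjoint_right, ofPred_forall]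
  exact isClosed_biInter fun i _ ↦ (isClopen_setOfPred_mem_fixedPoints i).compl.isClosed

theorem isClosed_setOfPred_conflictFree_fixedPoints (R : α → α → Prop) :
    IsClosed {c : α → α | ConflictFree R (fixedPoints c)} := by
  simp only [ConflictFree, ofPred_forall]
  refine isClosed_iInter fun a ↦ isClosed_imp (isClopen_setOfPred_mem_fixedPoints a).isOpen ?_
  simp only [ofPred_forall]
  exact isClosed_iInter fun b ↦
    isClosed_imp (isClopen_setOfPred_mem_fixedPoints b).isOpen isClosed_const

theorem isClosed_setOfPred_isLeast_attacker_mem_fixedPoints [LE α] (R : α → α → Prop) (i k : α) :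
    IsClosed {c : α → α | IsLeast {b ∈ fixedPoints c | R b i} k} := by
  simp only [IsLeast, lowerBounds, mem_ofPred_eq]
  refine ((isClopen_setOfPred_mem_fixedPoints k).isClosed.and isClosed_const).and ?_
  simp only [ofPred_forall]
  exact isClosed_iInter fun b ↦
    isClosed_imp ((isClopen_setOfPred_mem_fixedPoints b).isOpen.and isOpen_const) isClosed_const

theorem isClosed_setOfPred_isStableCode [LE α] (R : α → α → Prop) :
    IsClosed {c | IsStableCode R c} := by
  simp only [isStableCode_iff]
  refine (isClosed_setOfPred_conflictFree_fixedPoints R).and ?_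
  simp only [ofPred_forall]
  refine isClosed_iInter fun i ↦
    isClosed_imp (isClopen_setOfPred_mem_fixedPoints i).compl.isOpen ?_
  -- Naming `k = c i` replaces the composite `c (c i)` by values of `c` at fixed arguments.
  have eq_forall_value : {c : α → α | IsLeast {b ∈ fixedPoints c | R b i} (c i)} =
      {c | ∀ k, c i = k → IsLeast {b ∈ fixedPoints c | R b i} k} := by
    simp only [forall_eq']
  rw [eq_forall_value, ofPred_forall]
  exact isClosed_iInter fun k ↦
    isClosed_imp (isClopen_setOfPred_apply_eq i k).isOpen
      (isClosed_setOfPred_isLeast_attacker_mem_fixedPoints R i k)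

end StableCode

theorem tree_for_stable (R : ℕ → ℕ → Prop) (D E : Set ℕ) :
    ∃ T : Set (List ℕ), IsTree T ∧
      Nonempty ({π : ℕ → ℕ // IsPath T π} ≃
        {S : Set ℕ // Stable R S ∧ D ⊆ S ∧ S ∩ E = ∅}) ∧
      (Finitary R → FinitelyBranching T) := by
  let C : Set (ℕ → ℕ) := {c | IsStableCode R c} ∩
    Function.fixedPoints ⁻¹' {S | D ⊆ S ∧ S ∩ E = ∅}
  have isClosed_C : IsClosed C := (isClosed_setOfPred_isStableCode R).inter <|
    (isClosed_setOfPred_subset_fixedPoints D).inter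
      (isClosed_setOfPred_fixedPoints_inter_eq_empty E)
  have isPath_iff (π : ℕ → ℕ) : IsPath (initialSegments C) π ↔ π ∈ C := by
    rw [isPath_initialSegments_iff_mem_closure, isClosed_C.closure_eq]
  have bijOn_C : Set.BijOn Function.fixedPoints C {S | Stable R S ∧ D ⊆ S ∧ S ∩ E = ∅} :=
    (bijOn_fixedPoints_isStableCode R).inter_mapsTo (Set.mapsTo_preimage _ _)
      Set.inter_subset_right
  refine ⟨initialSegments C, isTree_initialSegments C,
    ⟨(Equiv.subtypeEquivRight isPath_iff).trans bijOn_C.equiv⟩, fun hR ↦ ?_⟩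
  refine finitelyBranching_initialSegments fun i ↦ ((hR i).insert i).subset ?_
  rintro _ ⟨c, hc, rfl⟩
  exact hc.1.apply_mem_insert_attackers i

end AF
end
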